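/- Let k be a positive integer and let a ≤ b ≤ c be nonnegative integers. There exist an n and a cap S ⊆ 𝔽₂ⁿ with |S| = k and dim(S) = k − 3 such that, for some basis X₁, X₂ of E(S), the three Venn regions of S other than the isolated point set have cardinalities a, b, c, if and only if: (1) a + b + c ≤ k; (2) a, b, and c all have the same parity; and (3) a + b ≥ 6. -/

import Mathlib

/-! Forward direction: if `X₀, X₁` is a basis of `E(S)`, then `X₀`, `X₁` and `X₀ ∆ X₁` are
nonempty even zero-sum sets. None has two elements (two distinct vectors do not sum to zero) or
four (`S` is a cap), so each has at least six. Their cardinalities are the pairwise sums of the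
three region sizes, which gives the parity condition and `a + b ≥ 6`.

Converse: choose `Y₀, Y₁ ⊆ {0, …, k - 1}` with Venn regions of sizes `a, b, c`, let `C ≤ 𝔽₂ᵏ` be
the code spanned by their indicator vectors, and let `S` be the image of the standard basis in the
quotient `𝔽₂ᵏ / C`. A subset of `S` has sum zero exactly when its indicator vector lies in `C`.
Every nonzero word of `C` has even weight at least six, so the points are distinct, `S` is a cap
and `E(S)` is `C`. The affine span of the standard basis has the even-weight vectors, a space of
dimension `k - 1`, as its direction; this contains `C`, so its image has dimension `k - 3`. -/

open scoped symmDiff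

/-- `zSet X a` is the symmetric difference of the sets `X i` over the indices `i` with
`a i = 1` (with `zSet X 0 = ∅`). -/
def zSet {α : Type*} [DecidableEq α] {r : ℕ} (X : Fin r → Finset α)
    (a : Fin r → ZMod 2) : Finset α :=
  (Finset.univ.filter (fun i => a i = 1)).fold (· ∆ ·) ∅ X

/-- The Venn region of `S` with respect to `X₁, …, X_r` determined by `a ∈ 𝔽₂^r`. -/
def vennRegion {α : Type*} [DecidableEq α] {r : ℕ} (S : Finset α)
    (X : Fin r → Finset α) (a : Fin r → ZMod 2) : Finset α :=
  S.filter (fun x => ∀ i, x ∈ X i ↔ a i = 1)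

/-- `E(S)`: the collection of all even zero-sum subsets of `S ⊆ 𝔽₂ⁿ`. -/
def evenZeroSums {n : ℕ} (S : Finset (Fin n → ZMod 2)) :
    Set (Finset (Fin n → ZMod 2)) :=
  {X | X ⊆ S ∧ Even X.card ∧ (∑ x ∈ X, x) = 0}

/-- The dimension of a subset `S ⊆ 𝔽₂ⁿ`: the dimension of its affine span. -/
noncomputable def affDim {n : ℕ} (S : Finset (Fin n → ZMod 2)) : ℕ :=
  Module.finrank (ZMod 2) (affineSpan (ZMod 2) (S : Set (Fin n → ZMod 2))).direction

/-- A subset `S ⊆ 𝔽₂ⁿ` is a cap (Sidon set) if no four distinct elements of `S` sum to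
the zero vector. -/
def IsCap {n : ℕ} (S : Finset (Fin n → ZMod 2)) : Prop :=
  ∀ w ∈ S, ∀ x ∈ S, ∀ y ∈ S, ∀ z ∈ S,
    w ≠ x → w ≠ y → w ≠ z → x ≠ y → x ≠ z → y ≠ z → w + x + y + z ≠ 0

/-! ### Combinations of two sets -/

lemma zSet_two {α : Type*} [DecidableEq α] (X : Fin 2 → Finset α) :
    zSet X ![0, 0] = ∅ ∧ zSet X ![1, 0] = X 0 ∧ zSet X ![0, 1] = X 1 ∧
      zSet X ![1, 1] = X 0 ∆ X 1 := by
  have h0 : Finset.univ.filter (fun i => (![0, 0] : Fin 2 → ZMod 2) i = 1) = ∅ := by decide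
  have h1 : Finset.univ.filter (fun i => (![1, 0] : Fin 2 → ZMod 2) i = 1) = {0} := by decide
  have h2 : Finset.univ.filter (fun i => (![0, 1] : Fin 2 → ZMod 2) i = 1) = {1} := by decide
  have h3 : Finset.univ.filter (fun i => (![1, 1] : Fin 2 → ZMod 2) i = 1) = {0, 1} := by decide
  unfold zSet
  rw [h0, h1, h2, h3]
  refine ⟨by simp, ?_, ?_, ?_⟩
  · rw [Finset.fold_singleton]; exact symmDiff_bot _
  · rw [Finset.fold_singleton]; exact symmDiff_bot _
  · rw [Finset.fold_insert (by decide), Finset.fold_singleton]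
    congr 1; exact symmDiff_bot _

lemma zmod_two_vec (s : Fin 2 → ZMod 2) :
    s = ![0, 0] ∨ s = ![1, 0] ∨ s = ![0, 1] ∨ s = ![1, 1] := by
  revert s; decide

lemma zmod_two_cases (x : ZMod 2) : x = 0 ∨ x = 1 := by
  revert x; decide

lemma exists_zSet_eq_iff {α : Type*} [DecidableEq α] (X : Fin 2 → Finset α) (U : Finset α) :
    (∃ s, zSet X s = U) ↔ U = ∅ ∨ U = X 0 ∨ U = X 1 ∨ U = X 0 ∆ X 1 := by
  obtain ⟨h0, h1, h2, h3⟩ := zSet_two X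
  constructor
  · rintro ⟨s, rfl⟩
    rcases zmod_two_vec s with rfl | rfl | rfl | rfl <;> simp [*]
  · rintro (rfl | rfl | rfl | rfl)
    exacts [⟨_, h0⟩, ⟨_, h1⟩, ⟨_, h2⟩, ⟨_, h3⟩]

/-! ### Even zero-sum sets of a cap and Venn regions -/

lemma vec_add_eq_zero {n : ℕ} {x y : Fin n → ZMod 2} : x + y = 0 ↔ x = y := by
  simp only [funext_iff, Pi.add_apply, Pi.zero_apply, CharTwo.add_eq_zero]

lemma six_le_card {n : ℕ} {S T : Finset (Fin n → ZMod 2)} (hS : IsCap S)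
    (hT : T ∈ evenZeroSums S) (hne : T ≠ ∅) : 6 ≤ T.card := by
  obtain ⟨hsub, hev, hsum⟩ := hT
  have h0 : T.card ≠ 0 := by simpa using hne
  have h2 : T.card ≠ 2 := by
    intro h
    obtain ⟨x, y, hxy, rfl⟩ := Finset.card_eq_two.1 h
    rw [Finset.sum_pair hxy] at hsum
    exact hxy (vec_add_eq_zero.1 hsum)
  have h4 : T.card ≠ 4 := by
    intro h
    obtain ⟨w, x, y, z, hwx, hwy, hwz, hxy, hxz, hyz, rfl⟩ := Finset.card_eq_four.1 h
    refine hS w (hsub (by simp)) x (hsub (by simp)) y (hsub (by simp)) z (hsub (by simp))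
      hwx hwy hwz hxy hxz hyz ?_
    rw [← hsum, Finset.sum_insert (by simp [*]), Finset.sum_insert (by simp [*]),
      Finset.sum_pair hyz]
    abel
  obtain ⟨m, hm⟩ := hev
  omega

/-- The sizes of `X₀`, `X₁`, `X₀ ∆ X₁` are the pairwise sums of the three region sizes. -/
lemma card_regions {α : Type*} [DecidableEq α] {S : Finset α} {X : Fin 2 → Finset α}
    (h0 : X 0 ⊆ S) (h1 : X 1 ⊆ S) :
    (X 0).card = (vennRegion S X ![1, 0]).card + (vennRegion S X ![1, 1]).card ∧
    (X 1).card = (vennRegion S X ![0, 1]).card + (vennRegion S X ![1, 1]).card ∧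
    (X 0 ∆ X 1).card = (vennRegion S X ![1, 0]).card + (vennRegion S X ![0, 1]).card ∧
    (vennRegion S X ![1, 0]).card + (vennRegion S X ![0, 1]).card
      + (vennRegion S X ![1, 1]).card ≤ S.card := by
  have e1 : vennRegion S X ![1, 0] = X 0 \ X 1 := by
    ext x; have := @h0 x; simp [vennRegion, Fin.forall_fin_two]; tauto
  have e2 : vennRegion S X ![0, 1] = X 1 \ X 0 := by
    ext x; have := @h1 x; simp [vennRegion, Fin.forall_fin_two]; tauto
  have e3 : vennRegion S X ![1, 1] = X 0 ∩ X 1 := by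
    ext x; have := @h1 x; simp [vennRegion, Fin.forall_fin_two]; tauto
  rw [e1, e2, e3]
  have hd : Disjoint (X 0 \ X 1) (X 1 \ X 0) := by
    rw [Finset.disjoint_left]; intro x; simp; tauto
  have hs : (X 0 ∆ X 1).card = (X 0 \ X 1).card + (X 1 \ X 0).card := by
    rw [← Finset.card_union_of_disjoint hd]; rfl
  have i1 := Finset.card_sdiff_add_card_inter (X 0) (X 1)
  have i2 := Finset.card_sdiff_add_card_inter (X 1) (X 0)
  rw [Finset.inter_comm] at i2
  have hu := Finset.card_le_card (Finset.union_subset h0 h1)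
  have hu2 := Finset.card_union_add_card_inter (X 0) (X 1)
  omega

/-! ### Indicator vectors and even weight -/

/-- The indicator vector of `U` in `𝔽₂ᵏ`. -/
def ind {k : ℕ} (U : Finset (Fin k)) : Fin k → ZMod 2 := ∑ i ∈ U, Pi.single i 1

lemma ind_apply {k : ℕ} (U : Finset (Fin k)) (i : Fin k) :
    ind U i = if i ∈ U then 1 else 0 := by
  simp [ind, Finset.sum_apply, Pi.single_apply]

lemma ind_injective {k : ℕ} : Function.Injective (ind (k := k)) := by
  intro U V h
  ext i
  have := congrFun h i
  rw [ind_apply, ind_apply] at this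
  by_cases h1 : i ∈ U <;> by_cases h2 : i ∈ V <;> simp_all

lemma ind_symmDiff {k : ℕ} (U V : Finset (Fin k)) : ind (U ∆ V) = ind U + ind V := by
  funext i
  rw [Pi.add_apply, ind_apply, ind_apply, ind_apply]
  by_cases h1 : i ∈ U <;> by_cases h2 : i ∈ V <;> simp [Finset.mem_symmDiff, h1, h2]
  decide

lemma ind_empty {k : ℕ} : ind (∅ : Finset (Fin k)) = 0 := by simp [ind]

lemma ind_mem_span_iff {k : ℕ} (Y : Fin 2 → Finset (Fin k)) (U : Finset (Fin k)) :
    ind U ∈ Submodule.span (ZMod 2) {ind (Y 0), ind (Y 1)} ↔ ∃ s, zSet Y s = U := by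
  rw [exists_zSet_eq_iff, Submodule.mem_span_pair]
  constructor
  · rintro ⟨x, y, h⟩
    rcases zmod_two_cases x with rfl | rfl <;> rcases zmod_two_cases y with rfl | rfl
    · left; apply ind_injective; rw [← h, ind_empty]; simp
    · right; right; left; apply ind_injective; rw [← h]; simp
    · right; left; apply ind_injective; rw [← h]; simp
    · right; right; right; apply ind_injective; rw [← h, ind_symmDiff]; simp
  · rintro (rfl | rfl | rfl | rfl)
    · exact ⟨0, 0, by simp [ind_empty]⟩
    · exact ⟨1, 0, by simp⟩
    · exact ⟨0, 1, by simp⟩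
    · exact ⟨1, 1, by simp [ind_symmDiff]⟩

/-- The coordinate-sum functional on `𝔽₂ᵏ`; its kernel is the space of even-weight vectors. -/
def coordSum (k : ℕ) : (Fin k → ZMod 2) →ₗ[ZMod 2] ZMod 2 := ∑ i, LinearMap.proj i

lemma coordSum_single {k : ℕ} (i : Fin k) : coordSum k (Pi.single i 1) = 1 := by
  simp [coordSum, LinearMap.sum_apply]

lemma coordSum_ind {k : ℕ} {U : Finset (Fin k)} (h : Even U.card) : coordSum k (ind U) = 0 := by
  rw [ind, map_sum]
  simp only [coordSum_single, Finset.sum_const, nsmul_eq_mul, mul_one]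
  exact (ZMod.natCast_eq_zero_iff_even).2 h

/-- The direction of the affine span of the standard basis is the even-weight subspace: one
inclusion is clear, and both have dimension `k - 1`. -/
lemma vectorSpan_single {k : ℕ} (hk : 0 < k) :
    vectorSpan (ZMod 2) (Set.range fun i : Fin k => (Pi.single i 1 : Fin k → ZMod 2))
      = LinearMap.ker (coordSum k) ∧
    Module.finrank (ZMod 2) (LinearMap.ker (coordSum k)) = k - 1 := by
  have hli : LinearIndependent (ZMod 2) (fun i : Fin k => (Pi.single i 1 : Fin k → ZMod 2)) :=
    Pi.linearIndependent_single_one (Fin k) (ZMod 2)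
  have hf := hli.affineIndependent.finrank_vectorSpan (n := k - 1) (by simp; omega)
  have hsurj : LinearMap.range (coordSum k) = ⊤ := by
    rw [LinearMap.range_eq_top]
    intro x
    exact ⟨x • Pi.single ⟨0, hk⟩ 1, by rw [map_smul, coordSum_single]; simp⟩
  have hker := LinearMap.finrank_range_add_finrank_ker (coordSum k)
  rw [hsurj] at hker
  simp at hker
  have hk1 : Module.finrank (ZMod 2) (LinearMap.ker (coordSum k)) = k - 1 := by omega
  refine ⟨Submodule.eq_of_le_of_finrank_eq ?_ (by rw [hf, hk1]), hk1⟩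
  rw [vectorSpan_def, Submodule.span_le]
  rintro _ ⟨_, ⟨i, rfl⟩, _, ⟨j, rfl⟩, rfl⟩
  simp [coordSum_single]

/-! ### Construction of the cap -/

/-- The cap realising a prescribed pair of even sets whose nonzero combinations have at least six
elements: the image of the standard basis of `𝔽₂ᵏ` modulo the span of the indicator vectors. -/
lemma exists_cap {k : ℕ} (hk : 0 < k) (Y : Fin 2 → Finset (Fin k))
    (e0 : Even (Y 0).card) (e1 : Even (Y 1).card)
    (c0 : 6 ≤ (Y 0).card) (c1 : 6 ≤ (Y 1).card) (c2 : 6 ≤ (Y 0 ∆ Y 1).card) :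
    ∃ (n : ℕ) (S : Finset (Fin n → ZMod 2)) (X : Fin 2 → Finset (Fin n → ZMod 2)),
      IsCap S ∧ S.card = k ∧ affDim S = k - 3 ∧
      (Set.range (zSet X) = evenZeroSums S ∧ Function.Injective (zSet X)) ∧
      ∀ s, (vennRegion S X s).card = (vennRegion Finset.univ Y s).card := by
  classical
  set C := Submodule.span (ZMod 2) {ind (Y 0), ind (Y 1)} with hC
  obtain ⟨n, φ, hφ⟩ : ∃ (n : ℕ) (φ : (Fin k → ZMod 2) →ₗ[ZMod 2] (Fin n → ZMod 2)),
      LinearMap.ker φ = C :=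
    ⟨_, (Module.finBasis (ZMod 2) ((Fin k → ZMod 2) ⧸ C)).equivFun.toLinearMap ∘ₗ C.mkQ, by simp⟩
  have hker : ∀ U : Finset (Fin k), φ (ind U) = 0 ↔ ∃ s, zSet Y s = U := by
    intro U
    rw [← ind_mem_span_iff, ← hC, ← hφ, LinearMap.mem_ker]
  -- Every nonzero word of `C` has weight at least six.
  have hsmall : ∀ U : Finset (Fin k), φ (ind U) = 0 → U.card < 6 → U = ∅ := by
    intro U h hU
    rcases (exists_zSet_eq_iff Y U).1 ((hker U).1 h) with h | rfl | rfl | rfl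
    · exact h
    all_goals omega
  let p : Fin k → Fin n → ZMod 2 := fun i => φ (Pi.single i 1)
  have hpind : ∀ U : Finset (Fin k), φ (ind U) = ∑ i ∈ U, p i := by
    intro U; rw [ind, map_sum]
  have hinj : Function.Injective p := by
    intro i j hij
    by_contra hne
    have := hsmall {i, j} (by rw [hpind, Finset.sum_pair hne, vec_add_eq_zero, hij])
      (by rw [Finset.card_pair hne]; omega)
    simp at this
  have hsumimg : ∀ U : Finset (Fin k), ∑ x ∈ U.image p, x = φ (ind U) := by
    intro U; rw [hpind, Finset.sum_image hinj.injOn]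
  have hz : ∀ s, zSet (fun j => (Y j).image p) s = (zSet Y s).image p := by
    intro s
    obtain ⟨h0, h1, h2, h3⟩ := zSet_two Y
    obtain ⟨g0, g1, g2, g3⟩ := zSet_two (fun j => (Y j).image p)
    rcases zmod_two_vec s with rfl | rfl | rfl | rfl
    · rw [h0, g0]; simp
    · rw [h1, g1]
    · rw [h2, g2]
    · rw [h3, g3, Finset.image_symmDiff _ _ hinj]
  have hzev : ∀ s, Even (zSet Y s).card := by
    intro s
    rcases (exists_zSet_eq_iff Y _).1 ⟨s, rfl⟩ with h | h | h | h <;> rw [h]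
    · simp
    · exact e0
    · exact e1
    · obtain ⟨r1, r2, r3, -⟩ :=
        card_regions (X := Y) (Finset.subset_univ _) (Finset.subset_univ _)
      rw [Nat.even_iff] at *
      omega
  have hY0 : Y 0 ≠ ∅ := by rintro h; simp [h] at c0
  have hY1 : Y 1 ≠ ∅ := by rintro h; simp [h] at c1
  have hY2 : Y 0 ≠ Y 1 := by rintro h; rw [h, symmDiff_self] at c2; simp at c2
  have hzinj : Function.Injective (zSet Y) := by
    intro s t hst
    obtain ⟨h0, h1, h2, h3⟩ := zSet_two Y
    have hY3 : Y 0 ∆ Y 1 ≠ ∅ := by intro h; simp [h] at c2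
    have hY4 : Y 0 ∆ Y 1 ≠ Y 0 := fun h => hY1 (symmDiff_eq_left.1 h)
    have hY5 : Y 0 ∆ Y 1 ≠ Y 1 := fun h => hY0 (symmDiff_eq_right.1 h)
    rcases zmod_two_vec s with rfl | rfl | rfl | rfl <;>
      rcases zmod_two_vec t with rfl | rfl | rfl | rfl <;>
      first
      | rfl
      | (exfalso; simp only [h0, h1, h2, h3] at hst
         first
         | exact hY0 hst | exact hY1 hst | exact hY2 hst | exact hY3 hst | exact hY4 hst
         | exact hY5 hst | exact hY0 hst.symm | exact hY1 hst.symm | exact hY2 hst.symm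
         | exact hY3 hst.symm | exact hY4 hst.symm | exact hY5 hst.symm)
  refine ⟨n, Finset.univ.image p, fun j => (Y j).image p, ?_, ?_, ?_, ⟨?_, ?_⟩, ?_⟩
  · intro w hw x hx y hy z hz' h1 h2 h3 h4 h5 h6 hsum
    simp only [Finset.mem_image, Finset.mem_univ, true_and] at hw hx hy hz'
    obtain ⟨w, rfl⟩ := hw
    obtain ⟨x, rfl⟩ := hx
    obtain ⟨y, rfl⟩ := hy
    obtain ⟨z, rfl⟩ := hz'
    rw [hinj.ne_iff] at *
    have := hsmall {w, x, y, z} (by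
      rw [hpind, Finset.sum_insert (by simp [*]), Finset.sum_insert (by simp [*]),
        Finset.sum_pair h6, ← hsum]
      abel) (lt_of_le_of_lt Finset.card_le_four (by omega))
    simp at this
  · rw [Finset.card_image_of_injective _ hinj]; simp
  · have hCle : C ≤ LinearMap.ker (coordSum k) := by
      rw [hC, Submodule.span_le]
      rintro _ (rfl | rfl)
      exacts [coordSum_ind e0, coordSum_ind e1]
    have hCfin : Module.finrank (ZMod 2) C = 2 := by
      have hli : LinearIndependent (ZMod 2) ![ind (Y 0), ind (Y 1)] := by
        rw [LinearIndependent.pair_iff]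
        intro x y h
        rcases zmod_two_cases x with rfl | rfl <;> rcases zmod_two_cases y with rfl | rfl
        · simp
        · exact absurd (ind_injective (by rw [ind_empty]; simpa using h)) hY1
        · exact absurd (ind_injective (by rw [ind_empty]; simpa using h)) hY0
        · exact absurd (ind_injective (vec_add_eq_zero.1 (by simpa using h))) hY2
      have := finrank_span_eq_card hli
      rw [Matrix.range_cons_cons_empty] at this
      simpa [hC] using this
    obtain ⟨hv, hvk⟩ := vectorSpan_single hk
    have himg : ((Finset.univ.image p : Finset _) : Set (Fin n → ZMod 2)) =
        φ.toAffineMap '' (Set.range fun i : Fin k => (Pi.single i 1 : Fin k → ZMod 2)) := by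
      rw [← Set.range_comp]; simp; rfl
    rw [affDim, direction_affineSpan, himg, ← AffineMap.map_vectorSpan, hv]
    -- Rank-nullity for `φ` restricted to the even-weight vectors, which contain `ker φ = C`.
    have hrn := LinearMap.finrank_range_add_finrank_ker
      (φ.domRestrict (LinearMap.ker (coordSum k)))
    rw [LinearMap.range_domRestrict, LinearMap.ker_domRestrict, hφ, hvk,
      (Submodule.comapSubtypeEquivOfLe hCle).finrank_eq, hCfin] at hrn
    rw [LinearMap.toAffineMap_linear]
    have hrn2 : Module.finrank (ZMod 2) (Submodule.map φ (LinearMap.ker (coordSum k))) + 2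
        = k - 1 := hrn
    omega
  · ext T
    constructor
    · rintro ⟨s, rfl⟩
      rw [hz]
      refine ⟨Finset.image_subset_image (Finset.subset_univ _), ?_, ?_⟩
      · rw [Finset.card_image_of_injective _ hinj]; exact hzev s
      · rw [hsumimg, hker]; exact ⟨s, rfl⟩
    · rintro ⟨hsub, -, hsum⟩
      obtain ⟨U, -, rfl⟩ := Finset.subset_image_iff.1 hsub
      rw [hsumimg, hker] at hsum
      obtain ⟨s, rfl⟩ := hsum
      exact ⟨s, hz s⟩
  · intro s t hst
    rw [hz, hz] at hst
    exact hzinj (Finset.image_injective hinj hst)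
  · intro s
    rw [← Finset.card_image_of_injective (vennRegion Finset.univ Y s) hinj]
    congr 1
    ext x
    simp only [vennRegion, Finset.mem_filter, Finset.mem_image, Finset.mem_univ, true_and]
    constructor
    · rintro ⟨⟨i, rfl⟩, h⟩
      refine ⟨i, fun j => ?_, rfl⟩
      rw [← h j]
      simp [hinj.eq_iff]
    · rintro ⟨i, h, rfl⟩
      refine ⟨⟨i, rfl⟩, fun j => ?_⟩
      rw [← h j]
      simp [hinj.eq_iff]

/-! ### Sets with prescribed region sizes -/

lemma card_fin_Ico {k l m : ℕ} (h : m ≤ k) :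
    (Finset.univ.filter (fun i : Fin k => l ≤ i.val ∧ i.val < m)).card = m - l := by
  rw [← Nat.card_Ico, ← Finset.card_map Fin.valEmbedding]
  congr 1
  ext x
  simp only [Finset.mem_map, Finset.mem_filter, Finset.mem_univ, true_and, Fin.valEmbedding_apply,
    Finset.mem_Ico]
  constructor
  · rintro ⟨i, hi, rfl⟩; exact hi
  · intro hx; exact ⟨⟨x, by omega⟩, hx, rfl⟩

lemma exists_regions {k a b c : ℕ} (h : a + b + c ≤ k) :
    ∃ Y : Fin 2 → Finset (Fin k), (vennRegion Finset.univ Y ![1, 0]).card = a ∧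
      (vennRegion Finset.univ Y ![0, 1]).card = b ∧
      (vennRegion Finset.univ Y ![1, 1]).card = c := by
  refine ⟨![Finset.univ.filter (fun i => i.val < a ∨ a + b ≤ i.val ∧ i.val < a + b + c),
    Finset.univ.filter (fun i => a ≤ i.val ∧ i.val < a + b + c)], ?_, ?_, ?_⟩
  · have := card_fin_Ico (k := k) (l := 0) (m := a) (by omega)
    rw [Nat.sub_zero] at this
    refine Eq.trans ?_ this
    congr 1; ext i
    simp [vennRegion, Fin.forall_fin_two]; omega
  · have := card_fin_Ico (k := k) (l := a) (m := a + b) (by omega)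
    rw [Nat.add_sub_cancel_left] at this
    refine Eq.trans ?_ this
    congr 1; ext i
    simp [vennRegion, Fin.forall_fin_two]; omega
  · have := card_fin_Ico (k := k) (l := a + b) (m := a + b + c) (by omega)
    rw [Nat.add_sub_cancel_left] at this
    refine Eq.trans ?_ this
    congr 1; ext i
    simp [vennRegion, Fin.forall_fin_two]; omega

lemma multiset_triple {p q r a b c : ℕ} (h : ({p, q, r} : Multiset ℕ) = {a, b, c}) :
    (p = a ∧ q = b ∧ r = c) ∨ (p = a ∧ q = c ∧ r = b) ∨ (p = b ∧ q = a ∧ r = c) ∨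
    (p = b ∧ q = c ∧ r = a) ∨ (p = c ∧ q = a ∧ r = b) ∨ (p = c ∧ q = b ∧ r = a) := by
  have hcount (x : ℕ) := congrArg (Multiset.count x) h
  simp only [Multiset.insert_eq_cons, Multiset.count_cons, Multiset.count_singleton] at hcount
  have hp := hcount p
  have hq := hcount q
  have hr := hcount r
  grind

/-- Let `k` be a positive integer and `a ≤ b ≤ c` nonnegative integers.  There exist an
`n` and a cap `S ⊆ 𝔽₂ⁿ` with `|S| = k` and `dim S = k − 3` such that, for some basis
`X₁, X₂` of `E(S)`, the three Venn regions of `S` other than the isolated point set have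
cardinalities `a, b, c`, if and only if: (1) `a + b + c ≤ k`; (2) `a`, `b`, `c` all have
the same parity; and (3) `a + b ≥ 6`. -/
theorem stmt_19 (k : ℕ) (hk : 0 < k) (a b c : ℕ) (hab : a ≤ b) (hbc : b ≤ c) :
    (∃ (n : ℕ) (S : Finset (Fin n → ZMod 2))
        (X : Fin 2 → Finset (Fin n → ZMod 2)),
      IsCap S ∧ S.card = k ∧ affDim S = k - 3 ∧
      (Set.range (zSet X) = evenZeroSums S ∧ Function.Injective (zSet X)) ∧
      ({(vennRegion S X ![1, 0]).card, (vennRegion S X ![0, 1]).card,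
          (vennRegion S X ![1, 1]).card} : Multiset ℕ) = {a, b, c}) ↔
      (a + b + c ≤ k ∧ (Even a ↔ Even b) ∧ (Even b ↔ Even c) ∧ 6 ≤ a + b) := by
  constructor
  · rintro ⟨n, S, X, hS, hcard, -, ⟨hE, hinj⟩, hm⟩
    obtain ⟨z0, z1, z2, z3⟩ := zSet_two X
    have hmem : ∀ s, zSet X s ∈ evenZeroSums S := fun s => hE ▸ ⟨s, rfl⟩
    have hne : ∀ s, s ≠ ![0, 0] → zSet X s ≠ ∅ := fun s hs h => hs (hinj (h.trans z0.symm))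
    have m0 := hmem ![1, 0]
    have m1 := hmem ![0, 1]
    have m2 := hmem ![1, 1]
    have l0 := six_le_card hS m0 (hne _ (by decide))
    have l1 := six_le_card hS m1 (hne _ (by decide))
    have l2 := six_le_card hS m2 (hne _ (by decide))
    rw [z1] at m0 l0
    rw [z2] at m1 l1
    rw [z3] at m2 l2
    obtain ⟨r0, r1, r2, r3⟩ := card_regions m0.1 m1.1
    have v0 := m0.2.1
    have v1 := m1.2.1
    have v2 := m2.2.1
    rw [Nat.even_iff] at v0 v1 v2
    simp only [Nat.even_iff]
    have := multiset_triple hm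
    omega
  · rintro ⟨h1, h2, h3, h4⟩
    obtain ⟨Y, ha, hb, hc⟩ := exists_regions h1
    obtain ⟨r0, r1, r2, -⟩ :=
      card_regions (X := Y) (Finset.subset_univ _) (Finset.subset_univ _)
    simp only [Nat.even_iff] at h2 h3
    obtain ⟨n, S, X, hcap, hcard, hdim, hbasis, hv⟩ := exists_cap hk Y
      (by rw [Nat.even_iff]; omega) (by rw [Nat.even_iff]; omega)
      (by omega) (by omega) (by omega)
    exact ⟨n, S, X, hcap, hcard, hdim, hbasis, by rw [hv, hv, hv, ha, hb, hc]⟩
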